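/- Let N ≥ 2, m_1,…,m_N > 0, h ∈ ℝ, and let V(u_1,…,u_N) = (1/2) Σ_{1≤i≠j≤N} V_{ij}(u_i − u_j) with each V_{ij} : ℝ^n \ {0} → ℝ continuously differentiable and satisfying (V8') V_{ij}(ξ) = V_{ji}(ξ) for all ξ ≠ 0. Let ū = (ū_1,…,ū_N) : ℝ → (ℝ^n)^N be twice continuously differentiable, 1-periodic, antiperiodic in the sense that ū_i(t + 1/2) = −ū_i(t) for all i and t, and non-collision (ū_i(t) ≠ ū_j(t) for all t, i ≠ j). Suppose that for every continuously differentiable 1-periodic v : ℝ → (ℝ^n)^N which is antiperiodic (v_i(t + 1/2) = −v_i(t)), the function s ↦ f(ū + s v) has derivative 0 at s = 0, where f(u) = (1/2)(∫₀¹ Σ m_i |u̇_i|² dt)·(∫₀¹ (h − V(u)) dt), and suppose f(ū) > 0. Define T > 0 by 1/T² = (∫₀¹ (h − V(ū)) dt)/((1/2)∫₀¹ Σ m_i |ū̇_i|² dt). Then q(t) := ū(t/T) is a non-constant T-periodic non-collision solution of (Ph): m_i q̈_i(t) + ∇_{u_i}V(q(t)) = 0 and (1/2) Σ m_i |q̇_i(t)|²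 + V(q(t)) = h for all t. -/

import Mathlib

/-! The antiperiodic loops form a subspace on which criticality of the functional still gives the
full Euler–Lagrange equation, because `V_ij = V_ji` makes the total potential even
(`potential_neg`), so its gradient along `u` is itself antiperiodic.

Write `f(u) = K P` with `K = ½ ∫ Σ mᵢ |u̇ᵢ|²` and `P = ∫ (h - V(u))`. Differentiating under the
integral (`hasDerivAt_integral_line`) and dividing by `K > 0`, with `T⁻² = P / K`, criticality reads
`T⁻² ∫ Σ mᵢ ⟨u̇ᵢ, v̇ᵢ⟩ - ∫ Σ ⟨∇ᵢV(u), vᵢ⟩ = 0` for antiperiodic `v`. A du Bois-Reymond argument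
(`strong_of_weak`) turns this into `T⁻² mᵢ üᵢ + ∇ᵢV(u) = 0`: it relies on the fact that continuous
antiperiodic functions have antiperiodic primitives (`exists_antiperiodic_primitive`), so that no
bump functions are needed. Hence `½ T⁻² Σ mᵢ |u̇ᵢ|² + V(u)` is constant, and its mean over a
period is `T⁻² K + h - P = h`. Substituting `t / T` for the time gives the claims on `q`. -/

open Finset

/-! ### Differentiation under the integral sign -/

open Set MeasureTheory in
/-- Differentiation under the integral sign along the segment `u + s • v`. A tube around the
compact curve `u` stays in the open set `Ω`, and `fderiv F` is bounded on it. -/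
lemma hasDerivAt_integral_line {E : Type*} [NormedAddCommGroup E] [NormedSpace ℝ E]
    {Ω : Set E} (hΩ : IsOpen Ω) {F : E → ℝ} (hF : ContDiffOn ℝ 1 F Ω)
    {u v : ℝ → E} (hu : Continuous u) (hv : Continuous v) (huΩ : ∀ t, u t ∈ Ω) :
    HasDerivAt (fun s : ℝ => ∫ t in (0:ℝ)..1, F (u t + s • v t))
      (∫ t in (0:ℝ)..1, fderiv ℝ F (u t) (v t)) 0 := by
  have hc : Continuous (fun p : ℝ × ℝ => u p.2 + p.1 • v p.2) := by fun_prop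
  obtain ⟨A, hA, h0A, hAΩ⟩ : ∃ A : Set ℝ, IsOpen A ∧ (0:ℝ) ∈ A ∧
      ∀ s ∈ A, ∀ t ∈ Icc (0:ℝ) 1, u t + s • v t ∈ Ω := by
    obtain ⟨A, B, hA, -, h0A, hB, hAB⟩ := generalized_tube_lemma (isCompact_singleton (x := (0:ℝ)))
      (isCompact_Icc (a := (0:ℝ)) (b := 1)) (hΩ.preimage hc) (by
        rintro ⟨s, t⟩ ⟨hs, -⟩
        simp only [mem_singleton_iff] at hs
        simpa [hs] using huΩ t)
    exact ⟨A, hA, h0A rfl, fun s hs t ht => hAB (mk_mem_prod hs (hB ht))⟩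
  obtain ⟨ε, hε, hεA⟩ := Metric.nhds_basis_closedBall.mem_iff.1 (hA.mem_nhds h0A)
  set F' : ℝ → ℝ → ℝ := fun s t => fderiv ℝ F (u t + s • v t) (v t) with hF'
  have hdF : ContinuousOn (fderiv ℝ F) Ω := hF.continuousOn_fderiv_of_isOpen hΩ le_rfl
  have hmaps : MapsTo (fun p : ℝ × ℝ => u p.2 + p.1 • v p.2)
      (Metric.closedBall (0:ℝ) ε ×ˢ Icc (0:ℝ) 1) Ω := fun p hp => hAΩ _ (hεA hp.1) _ hp.2
  have hF'c : ContinuousOn (fun p : ℝ × ℝ => F' p.1 p.2)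
      (Metric.closedBall (0:ℝ) ε ×ˢ Icc (0:ℝ) 1) :=
    (hdF.comp hc.continuousOn hmaps).clm_apply (hv.comp continuous_snd).continuousOn
  have hFc : ContinuousOn (fun p : ℝ × ℝ => F (u p.2 + p.1 • v p.2))
      (Metric.closedBall (0:ℝ) ε ×ˢ Icc (0:ℝ) 1) := hF.continuousOn.comp hc.continuousOn hmaps
  obtain ⟨C, hC⟩ := ((isCompact_closedBall (0:ℝ) ε).prod isCompact_Icc).exists_bound_of_continuousOn
    hF'c
  have hslice : ∀ (G : ℝ × ℝ → ℝ), ContinuousOn G (Metric.closedBall (0:ℝ) ε ×ˢ Icc (0:ℝ) 1) →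
      ∀ s ∈ Metric.closedBall (0:ℝ) ε, IntervalIntegrable (fun t => G (s, t)) volume 0 1 := by
    intro G hG s hs
    apply ContinuousOn.intervalIntegrable
    rw [Set.uIcc_of_le zero_le_one]
    exact hG.comp (by fun_prop) fun t ht => mk_mem_prod hs ht
  have h0 : (0:ℝ) ∈ Metric.closedBall (0:ℝ) ε := Metric.mem_closedBall_self hε.le
  have hsub : ∀ t ∈ uIoc (0:ℝ) 1, t ∈ Icc (0:ℝ) 1 := by
    intro t ht
    rw [uIoc_of_le zero_le_one] at ht
    exact Ioc_subset_Icc_self ht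
  have key := (intervalIntegral.hasDerivAt_integral_of_dominated_loc_of_deriv_le
    (F := fun s t => F (u t + s • v t)) (F' := F') (μ := volume) (a := 0) (b := 1)
    (bound := fun _ => C) (Metric.closedBall_mem_nhds (0:ℝ) hε) ?_ (hslice _ hFc 0 h0)
    ?_ ?_ (by simp) ?_).2
  · simpa [hF'] using key
  · filter_upwards [Metric.closedBall_mem_nhds (0:ℝ) hε] with s hs
    exact (intervalIntegrable_iff.1 (hslice _ hFc s hs)).aestronglyMeasurable
  · exact (intervalIntegrable_iff.1 (hslice _ hF'c 0 h0)).aestronglyMeasurable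
  · exact .of_forall fun t ht s hs => hC (s, t) (mk_mem_prod hs (hsub t ht))
  · refine .of_forall fun t ht s hs => ?_
    have hmem := hAΩ s (hεA hs) t (hsub t ht)
    have h1 : HasFDerivAt F (fderiv ℝ F (u t + s • v t)) (u t + s • v t) :=
      ((hF.differentiableOn one_ne_zero).differentiableAt (hΩ.mem_nhds hmem)).hasFDerivAt
    have h2 : HasDerivAt (fun s : ℝ => u t + s • v t) (v t) s := by
      simpa using ((hasDerivAt_id s).smul_const (v t)).const_add (u t)
    exact h1.comp_hasDerivAt s h2

/-! ### Antiperiodic functions and the du Bois-Reymond argument -/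

/-- Inside the antiperiodic class a primitive always exists: the integration constant is
determined by `G (t + 1/2) + G t`, which does not depend on `t`. -/
lemma exists_antiperiodic_primitive {E : Type*} [NormedAddCommGroup E] [NormedSpace ℝ E]
    [CompleteSpace E] {g : ℝ → E} (hg : Continuous g) (hanti : ∀ t, g (t + 1/2) = -g t) :
    ∃ G : ℝ → E, (∀ t, HasDerivAt G (g t) t) ∧ ∀ t, G (t + 1/2) = -G t := by
  set G : ℝ → E := fun t => ∫ x in (0:ℝ)..t, g x with hG
  have hd : ∀ t, HasDerivAt G (g t) t := fun t =>
    intervalIntegral.integral_hasDerivAt_right (hg.intervalIntegrable _ _)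
      hg.aestronglyMeasurable.stronglyMeasurableAtFilter hg.continuousAt
  have hH : ∀ t, HasDerivAt (fun t => G (t + 1/2) + G t) 0 t := by
    intro t
    have := ((hd (t + 1/2)).comp_add_const t (1/2)).add (hd t)
    rwa [hanti, neg_add_cancel] at this
  have hconst : ∀ t, G (t + 1/2) + G t = G (0 + 1/2) + G 0 := fun t =>
    is_const_of_deriv_eq_zero (fun t => (hH t).differentiableAt) (fun t => (hH t).deriv) t 0
  set c := G (0 + 1/2) + G 0
  refine ⟨fun t => G t - (1/2 : ℝ) • c, fun t => (hd t).sub_const _, fun t => ?_⟩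
  have : G (t + 1/2) = c - G t := eq_sub_of_add_eq (hconst t)
  beta_reduce
  rw [this]
  module

/-- The integral over a period of the derivative of a `1`-periodic function vanishes. -/
lemma integral_deriv_period_eq_zero {φ φ' : ℝ → ℝ} (hd : ∀ t, HasDerivAt φ (φ' t) t)
    (hc : Continuous φ') (h01 : φ 1 = φ 0) : ∫ t in (0:ℝ)..1, φ' t = 0 := by
  rw [intervalIntegral.integral_eq_sub_of_hasDerivAt (fun t _ => hd t) (hc.intervalIntegrable _ _),
    h01, sub_self]

/-- Weak form of the Euler–Lagrange equation implies the strong form: with antiperiodic primitives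
`G` of `g` and `v` of `W = c m p + G` (where `p` is the velocity), testing against `v` gives
`∫ |W|² = 0`, so `W = 0`, and differentiating `W` yields the equation. -/
lemma strong_of_weak {n N : ℕ} (m : Fin N → ℝ) (c : ℝ)
    {p p' g : ℝ → Fin N → EuclideanSpace ℝ (Fin n)}
    (hp : ∀ t, HasDerivAt p (p' t) t) (hpa : ∀ t, p (t + 1/2) = -p t)
    (hg : Continuous g) (hga : ∀ t, g (t + 1/2) = -g t)
    (hweak : ∀ v v' : ℝ → Fin N → EuclideanSpace ℝ (Fin n), (∀ t, HasDerivAt v (v' t) t) →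
      Continuous v' → (∀ t, v (t + 1/2) = -v t) →
      c * (∫ t in (0:ℝ)..1, ∑ i, m i * inner ℝ (p t i) (v' t i))
        - ∫ t in (0:ℝ)..1, ∑ i, inner ℝ (g t i) (v t i) = 0) :
    ∀ t i, (c * m i) • p' t i + g t i = 0 := by
  have hpc : Continuous p := continuous_iff_continuousAt.2 fun t => (hp t).continuousAt
  obtain ⟨G, hG, hGa⟩ := exists_antiperiodic_primitive hg hga
  have hGc : Continuous G := continuous_iff_continuousAt.2 fun t => (hG t).continuousAt
  set W : ℝ → Fin N → EuclideanSpace ℝ (Fin n) := fun t i => (c * m i) • p t i + G t i with hW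
  have hWc : Continuous W := by fun_prop
  have hWa : ∀ t, W (t + 1/2) = -W t := by
    intro t
    ext1 i
    simp only [hW, hpa, hGa, Pi.neg_apply, smul_neg, neg_add]
  obtain ⟨v, hv, hva⟩ := exists_antiperiodic_primitive hWc hWa
  have hvc : Continuous v := continuous_iff_continuousAt.2 fun t => (hv t).continuousAt
  have hw := hweak v W hv hWc hva
  have hper : ∀ {w : ℝ → Fin N → EuclideanSpace ℝ (Fin n)}, (∀ t, w (t + 1/2) = -w t) →
      ∀ t, w (t + 1) = w t := by
    intro w hw t
    rw [show t + 1 = (t + 1/2) + 1/2 by ring, hw, hw, neg_neg]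
  have hparts : ∫ t in (0:ℝ)..1,
      ((∑ i, inner ℝ (g t i) (v t i)) + ∑ i, inner ℝ (G t i) (W t i)) = 0 := by
    apply integral_deriv_period_eq_zero (φ := fun t => ∑ i, inner ℝ (G t i) (v t i))
    · intro t
      rw [← sum_add_distrib]
      refine HasDerivAt.fun_sum fun i _ => ?_
      have := (hasDerivAt_pi.1 (hG t) i).inner ℝ (hasDerivAt_pi.1 (hv t) i)
      rwa [add_comm] at this
    · fun_prop
    · have h1 := hper hGa 0
      have h2 := hper hva 0
      rw [zero_add] at h1 h2
      simp only [h1, h2]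
  have hzero : ∫ t in (0:ℝ)..1, ∑ i, ‖W t i‖ ^ 2 = 0 := by
    rw [intervalIntegral.integral_add (Continuous.intervalIntegrable (by fun_prop) _ _)
      (Continuous.intervalIntegrable (by fun_prop) _ _)] at hparts
    have : ∀ t, ∑ i, ‖W t i‖ ^ 2 =
        c * (∑ i, m i * inner ℝ (p t i) (W t i)) + ∑ i, inner ℝ (G t i) (W t i) := by
      intro t
      rw [mul_sum, ← sum_add_distrib]
      refine sum_congr rfl fun i _ => ?_
      rw [← real_inner_self_eq_norm_sq]
      conv_lhs => enter [2]; simp only [hW]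
      rw [inner_add_left, real_inner_smul_left, mul_assoc]
    simp only [this]
    rw [intervalIntegral.integral_add (Continuous.intervalIntegrable (by fun_prop) _ _)
      (Continuous.intervalIntegrable (by fun_prop) _ _), intervalIntegral.integral_const_mul]
    linarith
  have hW01 : ∀ t ∈ Set.Icc (0:ℝ) 1, ∑ i, ‖W t i‖ ^ 2 = 0 := by
    by_contra! hne
    obtain ⟨t, ht, hne⟩ := hne
    have hnn : ∀ t, 0 ≤ ∑ i, ‖W t i‖ ^ 2 := fun t => sum_nonneg fun i _ => by positivity
    have := intervalIntegral.integral_pos (f := fun t => ∑ i, ‖W t i‖ ^ 2) zero_lt_one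
      (by fun_prop) (fun t _ => hnn t) ⟨t, ht, (hnn t).lt_of_ne' hne⟩
    linarith
  have hW0 : ∀ t, W t = 0 := by
    intro t
    have hP : Function.Periodic W 1 := hper hWa
    obtain ⟨y, hy, hWy⟩ := hP.exists_mem_Ico₀ one_pos t
    rw [hWy]
    ext1 i
    have := (sum_eq_zero_iff_of_nonneg (fun i _ => by positivity)).1
      (hW01 y ⟨hy.1, hy.2.le⟩) i (mem_univ i)
    simpa using this
  intro t i
  have h1 : HasDerivAt (fun t => W t i) ((c * m i) • p' t i + g t i) t :=
    ((hasDerivAt_pi.1 (hp t) i).const_smul (c * m i)).add (hasDerivAt_pi.1 (hG t) i)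
  have h2 : HasDerivAt (fun t => W t i) 0 t := by
    simp only [hW0]
    exact hasDerivAt_const t _
  exact h1.unique h2

/-! ### The potential and the kinetic energy -/

/-- The collision-free configurations. -/
def noncollisionSet (n N : ℕ) : Set (Fin N → EuclideanSpace ℝ (Fin n)) :=
  {X | ∀ i j, i ≠ j → X i ≠ X j}

lemma isOpen_noncollisionSet (n N : ℕ) : IsOpen (noncollisionSet n N) := by
  simp only [noncollisionSet, Set.ofPred_forall]
  refine isOpen_iInter_of_finite fun i => isOpen_iInter_of_finite fun j =>
    isOpen_iInter_of_finite fun _ => ?_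
  exact isOpen_ne_fun (continuous_apply i) (continuous_apply j)

lemma contDiffOn_potential {n N : ℕ} {V : Fin N → Fin N → EuclideanSpace ℝ (Fin n) → ℝ}
    (hV : ∀ i j, i ≠ j → ContDiffOn ℝ 1 (V i j) {ξ | ξ ≠ 0})
    {Vtot : (Fin N → EuclideanSpace ℝ (Fin n)) → ℝ}
    (hVtot : ∀ X, Vtot X =
      (1/2) * ∑ i, ∑ j ∈ univ.filter (fun j => j ≠ i), V i j (X i - X j)) :
    ContDiffOn ℝ 1 Vtot (noncollisionSet n N) := by
  rw [show Vtot = _ from funext hVtot]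
  refine contDiffOn_const.mul (ContDiffOn.sum fun i _ => ContDiffOn.sum fun j hj => ?_)
  have hij : i ≠ j := (mem_filter.1 hj).2.symm
  refine (hV i j hij).comp (t := {ξ | ξ ≠ 0})
    (f := fun X : Fin N → EuclideanSpace ℝ (Fin n) => X i - X j) ?_ ?_
  · exact ((contDiff_apply ℝ _ i).sub (contDiff_apply ℝ _ j)).contDiffOn
  · exact fun X hX => sub_ne_zero.2 (hX i j hij)

/-- `V_ij = V_ji` makes the total potential even: negating the configuration amounts to
exchanging the two particles of each pair. -/
lemma potential_neg {n N : ℕ} {V : Fin N → Fin N → EuclideanSpace ℝ (Fin n) → ℝ}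
    (hV8 : ∀ i j, i ≠ j → ∀ ξ : EuclideanSpace ℝ (Fin n), ξ ≠ 0 → V i j ξ = V j i ξ)
    {Vtot : (Fin N → EuclideanSpace ℝ (Fin n)) → ℝ}
    (hVtot : ∀ X, Vtot X =
      (1/2) * ∑ i, ∑ j ∈ univ.filter (fun j => j ≠ i), V i j (X i - X j))
    {X : Fin N → EuclideanSpace ℝ (Fin n)} (hX : X ∈ noncollisionSet n N) :
    Vtot (-X) = Vtot X := by
  rw [hVtot, hVtot]
  congr 1
  simp only [sum_filter]
  rw [sum_comm]
  refine sum_congr rfl fun i _ => sum_congr rfl fun j _ => ?_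
  by_cases hij : i = j
  · simp [hij]
  · rw [if_pos hij, if_pos (Ne.symm hij), hV8 j i (Ne.symm hij)]
    · simp only [Pi.neg_apply]
      congr 1
      abel
    · simpa [sub_eq_zero, neg_add_eq_zero] using hX j i (Ne.symm hij)

/-- The derivative of an even function is odd. -/
lemma fderiv_potential_neg {n N : ℕ} {Vtot : (Fin N → EuclideanSpace ℝ (Fin n)) → ℝ}
    (heven : ∀ X ∈ noncollisionSet n N, Vtot (-X) = Vtot X)
    {X : Fin N → EuclideanSpace ℝ (Fin n)} (hX : X ∈ noncollisionSet n N) :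
    fderiv ℝ Vtot (-X) = -fderiv ℝ Vtot X := by
  have hE : (fun Y => Vtot (-Y)) =ᶠ[nhds X] Vtot := by
    filter_upwards [(isOpen_noncollisionSet n N).mem_nhds hX] with Y hY using heven Y hY
  rw [← hE.fderiv_eq]
  have := (ContinuousLinearEquiv.neg ℝ
    (M := Fin N → EuclideanSpace ℝ (Fin n))).comp_right_fderiv (f := Vtot) (x := X)
  ext1 y
  simpa [Function.comp_def] using congrArg (fun L => -L y) this.symm

/-- The partial gradient in `uᵢ` is the Riesz dual of the `i`-th component of the total derivative. -/
lemma gradient_update_eq {n N : ℕ} {Vtot : (Fin N → EuclideanSpace ℝ (Fin n)) → ℝ}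
    {X : Fin N → EuclideanSpace ℝ (Fin n)} (hd : DifferentiableAt ℝ Vtot X) (i : Fin N) :
    gradient (fun y => Vtot (Function.update X i y)) (X i) =
      (InnerProductSpace.toDual ℝ (EuclideanSpace ℝ (Fin n))).symm
        ((fderiv ℝ Vtot X).comp
          (ContinuousLinearMap.single ℝ (fun _ : Fin N => EuclideanSpace ℝ (Fin n)) i)) := by
  have h1 : HasFDerivAt Vtot (fderiv ℝ Vtot X) (Function.update X i (X i)) := by
    rw [Function.update_eq_self]
    exact hd.hasFDerivAt
  have h2 := h1.comp (X i) (hasFDerivAt_update X (X i))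
  rw [gradient]
  congr 1
  rw [show (fun y => Vtot (Function.update X i y)) = Vtot ∘ Function.update X i from rfl, h2.fderiv]
  congr 1
  ext y j
  by_cases hj : j = i
  · subst hj; simp
  · simp [hj]

lemma fderiv_eq_sum_inner_gradient {n N : ℕ} {Vtot : (Fin N → EuclideanSpace ℝ (Fin n)) → ℝ}
    {X : Fin N → EuclideanSpace ℝ (Fin n)} (hd : DifferentiableAt ℝ Vtot X)
    (y : Fin N → EuclideanSpace ℝ (Fin n)) :
    fderiv ℝ Vtot X y =
      ∑ i, inner ℝ (gradient (fun y => Vtot (Function.update X i y)) (X i)) (y i) := by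
  simp only [gradient_update_eq hd, InnerProductSpace.toDual_symm_apply,
    ContinuousLinearMap.comp_apply, ContinuousLinearMap.single_apply]
  rw [← map_sum]
  congr 1
  exact (univ_sum_single y).symm

lemma fderiv_kinetic {n N : ℕ} (m : Fin N → ℝ) (x y : Fin N → EuclideanSpace ℝ (Fin n)) :
    fderiv ℝ (fun x : Fin N → EuclideanSpace ℝ (Fin n) => ∑ i, m i * ‖x i‖ ^ 2) x y =
      2 * ∑ i, m i * inner ℝ (x i) (y i) := by
  have h1 : DifferentiableAt ℝ
      (fun x : Fin N → EuclideanSpace ℝ (Fin n) => ∑ i, m i * ‖x i‖ ^ 2) x := by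
    have : ContDiff ℝ 1
      (fun x : Fin N → EuclideanSpace ℝ (Fin n) => ∑ i, m i * ‖x i‖ ^ 2) :=
      ContDiff.sum fun i _ => contDiff_const.mul ((contDiff_apply ℝ _ i).norm_sq ℝ)
    exact this.differentiable one_ne_zero x
  have h2 : HasDerivAt (fun s : ℝ => x + s • y) y 0 := by
    simpa using ((hasDerivAt_id (0:ℝ)).smul_const y).const_add x
  have h3 := (show HasFDerivAt _ _ (x + (0:ℝ) • y) by
    simpa using h1.hasFDerivAt).comp_hasDerivAt (0:ℝ) h2
  have h4 : HasDerivAt (fun s : ℝ => ∑ i, m i * ‖x i + s • y i‖ ^ 2)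
      (∑ i, m i * (2 * inner ℝ (x i) (y i))) 0 := by
    refine HasDerivAt.fun_sum fun i _ => ?_
    have := (hasDerivAt_pi.1 h2 i).norm_sq.const_mul (m i)
    simpa using this
  rw [h3.unique h4, mul_sum]
  exact sum_congr rfl fun i _ => by ring

/-! ### From critical points to solutions -/

/-- **Lemma 2.3**. Under the symmetry condition (V8'), a critical point `ū` of the
fixed-energy functional `f` on the space of antiperiodic loops with `f(ū) > 0` gives,
after the time rescaling `q(t) = ū(t/T)`, a non-constant `T`-periodic non-collision
solution of the fixed-energy system (Ph). -/
theorem symmetric_critical_point_gives_solution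
    (n N : ℕ) (hN : 2 ≤ N)
    (m : Fin N → ℝ) (hm : ∀ i, 0 < m i) (h : ℝ)
    (V : Fin N → Fin N → EuclideanSpace ℝ (Fin n) → ℝ)
    (hV_C1 : ∀ i j, i ≠ j → ContDiffOn ℝ 1 (V i j) {ξ | ξ ≠ 0})
    -- (V8')
    (hV8 : ∀ i j, i ≠ j → ∀ ξ : EuclideanSpace ℝ (Fin n), ξ ≠ 0 → V i j ξ = V j i ξ)
    (Vtot : (Fin N → EuclideanSpace ℝ (Fin n)) → ℝ)
    (hVtot : ∀ X, Vtot X =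
      (1/2) * ∑ i, ∑ j ∈ univ.filter (fun j => j ≠ i), V i j (X i - X j))
    (f : (ℝ → Fin N → EuclideanSpace ℝ (Fin n)) → ℝ)
    (hf : ∀ u : ℝ → Fin N → EuclideanSpace ℝ (Fin n), f u =
      (1/2) * (∫ t in (0:ℝ)..1, ∑ i, m i * ‖deriv (fun s => u s i) t‖ ^ 2)
        * (∫ t in (0:ℝ)..1, (h - Vtot (u t))))
    (u : ℝ → Fin N → EuclideanSpace ℝ (Fin n))
    (hu_C2 : ContDiff ℝ 2 u)
    (hu_per : ∀ t : ℝ, u (t + 1) = u t)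
    (hu_anti : ∀ t : ℝ, ∀ i, u (t + 1/2) i = -u t i)
    (hu_noncoll : ∀ t : ℝ, ∀ i j, i ≠ j → u t i ≠ u t j)
    -- `ū` is a critical point of `f` on the space of antiperiodic loops
    (hu_crit : ∀ v : ℝ → Fin N → EuclideanSpace ℝ (Fin n),
      ContDiff ℝ 1 v → (∀ t : ℝ, v (t + 1) = v t) →
      (∀ t : ℝ, ∀ i, v (t + 1/2) i = -v t i) →
      HasDerivAt (fun s : ℝ => f (fun t => u t + s • v t)) 0 0)
    (hf_pos : 0 < f u)
    (T : ℝ) (hT : 0 < T)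
    (hT_def : 1 / T ^ 2 =
      (∫ t in (0:ℝ)..1, (h - Vtot (u t)))
        / ((1/2) * ∫ t in (0:ℝ)..1, ∑ i, m i * ‖deriv (fun s => u s i) t‖ ^ 2)) :
    (∃ t₁ t₂ : ℝ, u (t₁ / T) ≠ u (t₂ / T)) ∧
    (∀ t : ℝ, u ((t + T) / T) = u (t / T)) ∧
    (∀ t : ℝ, ∀ i j, i ≠ j → u (t / T) i ≠ u (t / T) j) ∧
    (∀ t : ℝ, ∀ i,
      m i • deriv (deriv (fun s => u (s / T) i)) t
        + gradient (fun y => Vtot (Function.update (u (t / T)) i y)) (u (t / T) i)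
        = 0) ∧
    (∀ t : ℝ,
      (1/2) * ∑ i, m i * ‖deriv (fun s => u (s / T) i) t‖ ^ 2
        + Vtot (u (t / T)) = h) := by
  set Ω := noncollisionSet n N with hΩ
  have hΩo : IsOpen Ω := isOpen_noncollisionSet n N
  have hVC : ContDiffOn ℝ 1 Vtot Ω := contDiffOn_potential hV_C1 hVtot
  have huΩ : ∀ t, u t ∈ Ω := hu_noncoll
  have hVd : ∀ t, DifferentiableAt ℝ Vtot (u t) := fun t =>
    (hVC.differentiableOn one_ne_zero).differentiableAt (hΩo.mem_nhds (huΩ t))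
  have hanti : ∀ t, u (t + 1/2) = -u t := fun t => funext (hu_anti t)
  have huc : Continuous u := hu_C2.continuous
  have hud : ∀ t, HasDerivAt u (deriv u t) t := fun t =>
    (hu_C2.differentiable two_ne_zero t).hasDerivAt
  have hu1 : ContDiff ℝ 1 (deriv u) := ((contDiff_succ_iff_deriv (n := 1)).1 hu_C2).2.2
  have hu1d : ∀ t, HasDerivAt (deriv u) (deriv (deriv u) t) t := fun t =>
    (hu1.differentiable one_ne_zero t).hasDerivAt
  have hu1c : Continuous (deriv u) := hu1.continuous
  have hui : ∀ t i, deriv (fun s => u s i) t = deriv u t i := fun t i =>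
    (hasDerivAt_pi.1 (hud t) i).deriv
  have hu1anti : ∀ t, deriv u (t + 1/2) = -deriv u t := by
    intro t
    have h1 : HasDerivAt (fun s => u (s + 1/2)) (deriv u (t + 1/2)) t :=
      (hud (t + 1/2)).comp_add_const t (1/2)
    simp only [hanti] at h1
    exact h1.unique (hud t).fun_neg
  simp only [hui] at hT_def
  have hfu := hf u
  simp only [hui] at hfu
  set Q := ∫ t in (0:ℝ)..1, ∑ i, m i * ‖deriv u t i‖ ^ 2 with hQ
  set P := ∫ t in (0:ℝ)..1, (h - Vtot (u t)) with hP
  have hQnn : 0 ≤ Q := intervalIntegral.integral_nonneg zero_le_one fun t _ =>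
    sum_nonneg fun i _ => mul_nonneg (hm i).le (by positivity)
  have hQ0 : Q ≠ 0 := by
    intro hQ0
    rw [hfu, hQ0] at hf_pos
    simp at hf_pos
  have hQpos : 0 < Q := hQnn.lt_of_ne' hQ0
  set g : ℝ → Fin N → EuclideanSpace ℝ (Fin n) := fun t i =>
    gradient (fun y => Vtot (Function.update (u t) i y)) (u t i) with hg
  have hdc : Continuous fun t => fderiv ℝ Vtot (u t) :=
    (hVC.continuousOn_fderiv_of_isOpen hΩo le_rfl).comp_continuous huc huΩ
  have hgc : Continuous g := by
    refine continuous_pi fun i => ?_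
    simp only [hg, gradient_update_eq (hVd _)]
    exact (LinearIsometryEquiv.continuous _).comp (hdc.clm_comp continuous_const)
  have hga : ∀ t, g (t + 1/2) = -g t := by
    intro t
    ext1 i
    simp only [hg, gradient_update_eq (hVd _), Pi.neg_apply]
    rw [hanti, fderiv_potential_neg (fun X hX => potential_neg hV8 hVtot hX) (huΩ t),
      ContinuousLinearMap.neg_comp, map_neg]
  have hcQ : 1 / T ^ 2 * Q = 2 * P := by
    rw [hT_def]
    field_simp
  have hEL : ∀ t i, (1 / T ^ 2 * m i) • deriv (deriv u) t i + g t i = 0 := by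
    refine strong_of_weak m (1 / T ^ 2) hu1d hu1anti hgc hga ?_
    intro v v' hv hv'c hva
    have hvc : Continuous v := continuous_iff_continuousAt.2 fun t => (hv t).continuousAt
    have hdv : deriv v = v' := funext fun t => (hv t).deriv
    have hvC1 : ContDiff ℝ 1 v :=
      contDiff_one_iff_deriv.2 ⟨fun t => (hv t).differentiableAt, hdv ▸ hv'c⟩
    have hcrit := hu_crit v hvC1
      (fun t => by rw [show t + 1 = (t + 1/2) + 1/2 by ring, hva, hva, neg_neg])
      (fun t i => by rw [hva]; rfl)
    have hK := hasDerivAt_integral_line isOpen_univ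
      (F := fun x : Fin N → EuclideanSpace ℝ (Fin n) => ∑ i, m i * ‖x i‖ ^ 2)
      (ContDiff.sum fun i _ => contDiff_const.mul
        ((contDiff_apply ℝ _ i).norm_sq ℝ)).contDiffOn hu1c hv'c (fun t => Set.mem_univ _)
    have hPot := hasDerivAt_integral_line hΩo (F := fun X => h - Vtot X)
      (contDiffOn_const.sub hVC) huc hvc huΩ
    simp only [fderiv_kinetic, fderiv_const_sub, neg_apply,
      fderiv_eq_sum_inner_gradient (hVd _), intervalIntegral.integral_neg,
      intervalIntegral.integral_const_mul] at hK hPot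
    have hprod := (hK.const_mul (1/2)).mul hPot
    have hfeq : (fun s : ℝ => f (fun t => u t + s • v t)) = fun s : ℝ =>
        (1/2) * (∫ t in (0:ℝ)..1, ∑ i, m i * ‖(deriv u t + s • v' t) i‖ ^ 2)
          * (∫ t in (0:ℝ)..1, (h - Vtot (u t + s • v t))) := by
      funext s
      rw [hf]
      have : ∀ t i, deriv (fun r => (u r + s • v r) i) t = (deriv u t + s • v' t) i := fun t i =>
        (hasDerivAt_pi.1 ((hud t).add ((hv t).const_smul s)) i).deriv
      simp only [this]
    rw [hfeq] at hcrit
    have h0 := hcrit.unique hprod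
    simp only [zero_smul, add_zero] at h0
    rw [← hQ, ← hP] at h0
    have h1 : Q * (1 / T ^ 2 * (∫ t in (0:ℝ)..1, ∑ i, m i * inner ℝ (deriv u t i) (v' t i))
        - ∫ t in (0:ℝ)..1, ∑ i, inner ℝ (g t i) (v t i)) = 0 := by
      linear_combination (-2) * h0 +
        (∫ t in (0:ℝ)..1, ∑ i, m i * inner ℝ (deriv u t i) (v' t i)) * hcQ
    exact (mul_eq_zero.1 h1).resolve_left hQ0
  -- The energy defect is constant along `u` and has mean zero by the choice of `T`.
  set energy : ℝ → ℝ := fun t =>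
    1 / T ^ 2 * (1/2) * (∑ i, m i * ‖deriv u t i‖ ^ 2) - (h - Vtot (u t)) with henergy
  have henergy_d : ∀ t, HasDerivAt energy 0 t := by
    intro t
    have h1 : HasDerivAt (fun t => ∑ i, m i * ‖deriv u t i‖ ^ 2)
        (∑ i, m i * (2 * inner ℝ (deriv u t i) (deriv (deriv u) t i))) t :=
      HasDerivAt.fun_sum fun i _ => (hasDerivAt_pi.1 (hu1d t) i).norm_sq.const_mul (m i)
    have h2 := (hVd t).hasFDerivAt.comp_hasDerivAt t (hud t)
    rw [fderiv_eq_sum_inner_gradient (hVd t)] at h2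
    have h3 := (h1.const_mul (1 / T ^ 2 * (1/2))).sub (h2.const_sub h)
    refine h3.congr_deriv ?_
    rw [sub_neg_eq_add, mul_sum, ← sum_add_distrib]
    refine sum_eq_zero fun i _ => ?_
    have h4 : inner ℝ ((1 / T ^ 2 * m i) • deriv (deriv u) t i + g t i) (deriv u t i) = 0 := by
      rw [hEL, inner_zero_left]
    rw [inner_add_left, real_inner_smul_left, real_inner_comm] at h4
    linear_combination h4
  have hVu : Continuous fun t => h - Vtot (u t) :=
    continuous_const.sub (hVC.continuousOn.comp_continuous huc huΩ)
  have henergy0 : ∀ t, energy t = 0 := by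
    have hconst : ∀ t, energy t = energy 0 := fun t =>
      is_const_of_deriv_eq_zero (fun t => (henergy_d t).differentiableAt)
        (fun t => (henergy_d t).deriv) t 0
    have hint : ∫ t in (0:ℝ)..1, energy t = 0 := by
      simp only [henergy]
      rw [intervalIntegral.integral_sub (Continuous.intervalIntegrable (by fun_prop) _ _)
        (hVu.intervalIntegrable _ _), intervalIntegral.integral_const_mul,
        ← hQ, ← hP]
      linear_combination (1/2) * hcQ
    simp only [hconst, intervalIntegral.integral_const] at hint
    intro t
    rw [hconst]
    simpa using hint
  have hresc : ∀ t i, HasDerivAt (fun s => u (s / T) i) (T⁻¹ • deriv u (t / T) i) t := by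
    intro t i
    have h1 : HasDerivAt (fun s => s / T) T⁻¹ t := by
      simpa using (hasDerivAt_id t).div_const T
    exact (hasDerivAt_pi.1 (hud (t / T)) i).scomp t h1
  refine ⟨?_, ?_, fun t => hu_noncoll _, ?_, ?_⟩
  · by_contra! hne
    have hconst : u = fun _ => u 0 := by
      funext t
      have := hne (t * T) 0
      rwa [mul_div_cancel_right₀ _ hT.ne', zero_div] at this
    apply hQ0
    have hd0 : deriv u = fun _ => 0 := by
      rw [hconst]
      exact deriv_const' _
    rw [hQ, hd0]
    simp
  · intro t
    rw [add_div, div_self hT.ne', hu_per]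
  · intro t i
    have h1 : deriv (fun s => u (s / T) i) = fun s => T⁻¹ • deriv u (s / T) i :=
      funext fun t => (hresc t i).deriv
    have h2 : HasDerivAt (fun s => T⁻¹ • deriv u (s / T) i)
        (T⁻¹ • T⁻¹ • deriv (deriv u) (t / T) i) t := by
      have h3 : HasDerivAt (fun s => s / T) T⁻¹ t := by
        simpa using (hasDerivAt_id t).div_const T
      exact ((hasDerivAt_pi.1 (hu1d (t / T)) i).scomp t h3).const_smul T⁻¹
    rw [h1, h2.deriv, smul_smul, smul_smul]
    convert hEL (t / T) i using 3
    field_simp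
  · intro t
    have h1 := henergy0 (t / T)
    simp only [henergy] at h1
    simp only [(hresc t _).deriv, norm_smul, norm_inv, mul_pow, Real.norm_eq_abs, inv_pow, sq_abs]
    simp only [mul_left_comm (m _), ← mul_sum]
    rw [one_div (T ^ 2)] at h1
    linarith
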